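/- In the setting of the concave-denominator fractional program and Algorithm 1, assuming the solution set C is nonempty, for every x̄ ∈ C and every k ≥ 1 the convergence rate estimate 0 ≤ θ_{k+1} − θ̄ ≤ θ_1 (M + L‖x̄ − x^0‖²)/(k g(x̄)) holds. -/

import Mathlib

/-!
Write `a_k = ‖x̄ - x^k‖²`. Since the step size satisfies `1 / (2 η_{k+1}) = L θ_{k+1}`, the optimality
of `x^{k+1}` in the strongly convex proximal subproblem (`prox_three_point`), together with the
gradient inequality for the concave function `g` (`concave_gradient_ineq`) and the Lipschitz
continuity of its gradient, gives for every `y ∈ S ∩ D`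
`f (x^{k+1}) ≤ f y - θ_{k+1} g y + θ_{k+1} g (x^{k+1})
  + L θ_{k+1} (‖y - x^k‖² - ‖y - x^{k+1}‖²)`.

The choice `y = x^k` shows that `θ` is nonincreasing. The choice `y = x̄` gives
`(θ_{k+1} - θ̄) g x̄ ≤ M (θ_{k+1} - θ_{k+2}) + L θ_{k+1} (a_k - a_{k+1})`. By monotonicity of `θ` the
right-hand side is at most the decrease of the potential `θ_{k+1} (M + L a_k)`, so the bound
telescopes: `k (θ_{k+1} - θ̄) g x̄ + θ_{k+1} (M + L a_k) ≤ θ_1 (M + L a_0)`.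

When `θ_{k+1} = 0` the conventions for division by zero make `η_{k+1} = 0` and `1 / (2 η_{k+1}) = 0`,
so the subproblem becomes minimization of `f` and the same inequality holds.
-/


open Filter Topology Classical

/-- A concave function lies below its tangent hyperplanes. -/
lemma concave_gradient_ineq {H : Type*} [NormedAddCommGroup H] [InnerProductSpace ℝ H]
    [CompleteSpace H] {g : H → ℝ} {u p : H} (hg : ConcaveOn ℝ Set.univ g)
    (hp : HasGradientAt g p u) (y : H) : g y ≤ g u + inner ℝ p (y - u) := by
  -- Restrict `g` to the line through `u` and `y`.
  have hc : ConcaveOn ℝ Set.univ (g ∘ AffineMap.lineMap (k := ℝ) u y) := by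
    simpa using hg.comp_affineMap (AffineMap.lineMap (k := ℝ) u y)
  have hd : HasDerivAt (g ∘ AffineMap.lineMap (k := ℝ) u y) (inner ℝ p (y - u)) 0 := by
    have hl : HasDerivAt (AffineMap.lineMap (k := ℝ) u y) (y - u) 0 :=
      AffineMap.hasDerivAt_lineMap
    have hf : HasFDerivAt g (InnerProductSpace.toDual ℝ H p)
        (AffineMap.lineMap (k := ℝ) u y 0) := by
      simpa using hp.hasFDerivAt
    simpa using hf.comp_hasDerivAt (0 : ℝ) hl
  have h := hc.slope_le_of_hasDerivAt (x := 0) (y := 1) (Set.mem_univ _) (Set.mem_univ _)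
    one_pos hd
  simp [slope_def_field] at h
  linarith

/-- A minimizer `v` of `f + c ‖· - w‖²` over a convex set satisfies the minimality inequality with
the extra quadratic gain `c ‖y - v‖²` coming from strong convexity. -/
lemma prox_three_point {H : Type*} [NormedAddCommGroup H] [InnerProductSpace ℝ H]
    {K : Set H} {f : H → ℝ} (hf : ConvexOn ℝ K f) {c : ℝ} (hc : 0 ≤ c) {v w : H} (hv : v ∈ K)
    (hmin : ∀ y ∈ K, f v + c * ‖v - w‖ ^ 2 ≤ f y + c * ‖y - w‖ ^ 2) {y : H} (hy : y ∈ K) :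
    f v + c * ‖v - w‖ ^ 2 + c * ‖y - v‖ ^ 2 ≤ f y + c * ‖y - w‖ ^ 2 := by
  have hexp : ∀ t : ℝ, ‖v + t • (y - v) - w‖ ^ 2 =
      ‖v - w‖ ^ 2 + 2 * t * inner ℝ (v - w) (y - v) + t ^ 2 * ‖y - v‖ ^ 2 := by
    intro t
    rw [show v + t • (y - v) - w = (v - w) + t • (y - v) by abel, norm_add_sq_real,
      inner_smul_right, norm_smul, mul_pow, Real.norm_eq_abs, sq_abs]
    ring
  set A := f y - f v + 2 * c * inner ℝ (v - w) (y - v) with hA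
  set B := c * ‖y - v‖ ^ 2 with hB
  have hB0 : 0 ≤ B := by positivity
  -- Minimality along the segment from `v` to `y`, divided by the parameter.
  have hseg : ∀ t : ℝ, 0 < t → t ≤ 1 → 0 ≤ A + t * B := by
    intro t ht ht1
    have e : v + t • (y - v) = (1 - t) • v + t • y := by module
    have hmem : v + t • (y - v) ∈ K := by
      rw [e]; exact hf.1 hv hy (by linarith) ht.le (by ring)
    have hfc : f (v + t • (y - v)) ≤ (1 - t) * f v + t * f y := by
      rw [e]; simpa using hf.2 hv hy (by linarith : 0 ≤ 1 - t) ht.le (by ring)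
    have h := hmin _ hmem
    rw [hexp t] at h
    have h2 : 0 ≤ t * (A + t * B) := by rw [hA, hB]; linarith
    exact nonneg_of_mul_nonneg_right h2 ht
  have hA0 : 0 ≤ A := by
    by_contra! hneg
    have hBA : 0 < B - A := by linarith
    -- At `t = -A / (B - A)` the affine function `A + t B` equals `-A² / (B - A) < 0`.
    have h := hseg (-A / (B - A)) (div_pos (by linarith) hBA)
      ((div_le_one hBA).2 (by linarith))
    have e : A + -A / (B - A) * B = -(A ^ 2 / (B - A)) := by field_simp; ring
    have : 0 < A ^ 2 / (B - A) := div_pos (by nlinarith) hBA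
    linarith
  have h1 := hexp 1
  rw [one_smul, add_sub_cancel] at h1
  rw [h1]
  linarith

/-- The basic estimate for one step `u ↦ v`. -/
lemma step_estimate {H : Type*} [NormedAddCommGroup H] [InnerProductSpace ℝ H] [CompleteSpace H]
    {K : Set H} {f : H → ℝ} (hf : ConvexOn ℝ K f) {g : H → ℝ} {g' : H → H}
    (hg_grad : ∀ z, HasGradientAt g (g' z) z) (hg : ConcaveOn ℝ Set.univ g)
    {L : ℝ} (hL : 0 < L) (hlip : LipschitzWith (Real.toNNReal L) g')
    {t e : ℝ} (ht : 0 ≤ t) (he : e = 1 / (2 * L * t)) {u v : H} (hv : v ∈ K)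
    (hmin : ∀ y ∈ K, f v + 1 / (2 * e) * ‖v - (u + (t * e) • g' u)‖ ^ 2 ≤
      f y + 1 / (2 * e) * ‖y - (u + (t * e) • g' u)‖ ^ 2) {y : H} (hy : y ∈ K) :
    f v ≤ f y - t * g y + t * g v + L * t * (‖y - u‖ ^ 2 - ‖y - v‖ ^ 2) := by
  -- This holds for `t = 0` as well, both sides then being zero.
  have hc : 1 / (2 * e) = L * t := by
    rw [he]
    rcases eq_or_ne t 0 with h | h
    · simp [h]
    · field_simp
  rw [hc] at hmin
  have h3 := prox_three_point hf (by positivity) hv hmin hy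
  have hexp : ∀ z : H, L * t * ‖z - (u + (t * e) • g' u)‖ ^ 2 =
      L * t * ‖z - u‖ ^ 2 - t * inner ℝ (g' u) (z - u) + L * t * ‖(t * e) • g' u‖ ^ 2 := by
    intro z
    have hte : L * t * (2 * (t * e)) = t := by
      rw [he]
      rcases eq_or_ne t 0 with h | h
      · simp [h]
      · field_simp
    rw [← sub_sub, norm_sub_sq_real, inner_smul_right, real_inner_comm]
    linear_combination (-inner ℝ (g' u) (z - u)) * hte
  rw [hexp, hexp] at h3
  have hgy := concave_gradient_ineq hg (hg_grad u) y
  -- The gradient inequality at `v` and Lipschitz continuity of `g'` replace the descent lemma: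
  -- the constant `L` in place of `L / 2` is all that the step size requires.
  have hgv := concave_gradient_ineq hg (hg_grad v) u
  have hcs : inner ℝ (g' u - g' v) (v - u) ≤ L * ‖v - u‖ ^ 2 := by
    have h := hlip.norm_sub_le u v
    rw [Real.coe_toNNReal _ hL.le, norm_sub_rev u v] at h
    calc inner ℝ (g' u - g' v) (v - u) ≤ ‖g' u - g' v‖ * ‖v - u‖ := real_inner_le_norm _ _
      _ ≤ L * ‖v - u‖ * ‖v - u‖ := by gcongr
      _ = L * ‖v - u‖ ^ 2 := by ring
  have hneg : inner ℝ (g' v) (u - v) = -inner ℝ (g' v) (v - u) := by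
    rw [← inner_neg_right, neg_sub]
  rw [inner_sub_left] at hcs
  have key : 0 ≤ t * (inner ℝ (g' u) (y - u) - inner ℝ (g' u) (v - u)
      - g y + g v + L * ‖v - u‖ ^ 2) := mul_nonneg ht (by linarith)
  linarith

/-- Convergence rate (2.2) for Algorithm 1 (concave denominator): for every `x̄ ∈ C` and
every `k ≥ 1`, `0 ≤ θ_{k+1} − θ̄ ≤ θ_1 (M + L‖x̄ − x^0‖²)/(k g(x̄))`. -/
theorem algorithm1_convergence_rate
    {H : Type*} [NormedAddCommGroup H] [InnerProductSpace ℝ H] [CompleteSpace H]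
    (S : Set H) (hS_ne : S.Nonempty) (hS_conv : Convex ℝ S) (hS_closed : IsClosed S)
    -- f : H → ℝ ∪ {+∞} is encoded via its (nonempty) effective domain D and real values f on D
    (f : H → ℝ) (D : Set H) (hf_proper : D.Nonempty)
    (hf_convex : ConvexOn ℝ D f)
    (hf_lsc : LowerSemicontinuous fun z => if z ∈ D then ((f z : ℝ) : EReal) else ⊤)
    (hDS : (D ∩ S).Nonempty)
    (hf_nonneg : ∀ z ∈ S ∩ D, 0 ≤ f z)
    (g : H → ℝ) (g' : H → H)
    (hg_grad : ∀ z, HasGradientAt g (g' z) z)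
    (hg_concave : ConcaveOn ℝ Set.univ g)
    (L : ℝ) (hL : 0 < L)
    (hg_lip : LipschitzWith (Real.toNNReal L) g')
    (M : ℝ) (hM : 0 < M)
    (hg_pos : ∀ z ∈ S, 0 < g z) (hg_le : ∀ z ∈ S, g z ≤ M)
    -- Algorithm 1: sequences x, θ, η (θ_{k+1} = f(x^k)/g(x^k) for k ≥ 0, η_k = 1/(2Lθ_k) for k ≥ 1)
    (x : ℕ → H) (θ η : ℕ → ℝ)
    (hx0 : x 0 ∈ S ∩ D)
    (hθ : ∀ k : ℕ, θ (k + 1) = f (x k) / g (x k))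
    (hη : ∀ k : ℕ, η (k + 1) = 1 / (2 * L * θ (k + 1)))
    -- x^{k+1} is the minimizer over S of y ↦ f(y) + (1/(2η_{k+1}))‖y − (x^k + θ_{k+1}η_{k+1}∇g(x^k))‖²
    (hstep : ∀ k : ℕ, x (k + 1) ∈ S ∩ D ∧ ∀ y ∈ S ∩ D,
      f (x (k + 1)) + 1 / (2 * η (k + 1)) *
          ‖x (k + 1) - (x k + (θ (k + 1) * η (k + 1)) • g' (x k))‖ ^ 2 ≤
        f y + 1 / (2 * η (k + 1)) * ‖y - (x k + (θ (k + 1) * η (k + 1)) • g' (x k))‖ ^ 2)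
    -- θ̄ = inf_{z ∈ S} f(z)/g(z) and the solution set C = {z ∈ S : f(z)/g(z) = θ̄} is nonempty
    (θbar : ℝ) (hθbar : IsGLB ((fun z => f z / g z) '' (S ∩ D)) θbar)
    (hC_ne : ∃ xb ∈ S ∩ D, f xb / g xb = θbar)
    :
    ∀ xb, xb ∈ S ∩ D → f xb / g xb = θbar →
      ∀ k : ℕ, 1 ≤ k →
        0 ≤ θ (k + 1) - θbar ∧
          θ (k + 1) - θbar ≤ θ 1 * (M + L * ‖xb - x 0‖ ^ 2) / (k * g xb) := by
  intro xb hxb hxbθ k _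
  have hconv : ConvexOn ℝ (S ∩ D) f :=
    hf_convex.subset Set.inter_subset_right (hS_conv.inter hf_convex.1)
  have hx : ∀ k, x k ∈ S ∩ D := by
    intro k
    cases k with
    | zero => exact hx0
    | succ k => exact (hstep k).1
  have hgx : ∀ k, 0 < g (x k) := fun k => hg_pos _ (hx k).1
  have hgb : 0 < g xb := hg_pos _ hxb.1
  have hθ0 : ∀ k, 0 ≤ θ (k + 1) := fun k => by
    rw [hθ]; exact div_nonneg (hf_nonneg _ (hx k)) (hgx k).le
  have hfx : ∀ k, f (x k) = θ (k + 1) * g (x k) := fun k => by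
    rw [hθ, div_mul_cancel₀ _ (hgx k).ne']
  have hfb : f xb = θbar * g xb := by rw [← hxbθ, div_mul_cancel₀ _ hgb.ne']
  have hlow : ∀ k, θbar ≤ θ (k + 1) := fun k => by
    rw [hθ]; exact hθbar.1 ⟨x k, hx k, rfl⟩
  have hest : ∀ k, ∀ y ∈ S ∩ D, θ (k + 2) * g (x (k + 1)) ≤ f y - θ (k + 1) * g y +
      θ (k + 1) * g (x (k + 1)) +
      L * θ (k + 1) * (‖y - x k‖ ^ 2 - ‖y - x (k + 1)‖ ^ 2) := by
    intro k y hy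
    rw [← hfx (k + 1)]
    exact step_estimate hconv hg_grad hg_concave hL hg_lip (hθ0 k) (hη k) (hstep k).1
      (hstep k).2 hy
  have hanti : ∀ k, θ (k + 2) ≤ θ (k + 1) := by
    intro k
    have h := hest k (x k) (hx k)
    rw [hfx k, sub_self (x k), norm_zero] at h
    have hn : 0 ≤ L * θ (k + 1) * ‖x k - x (k + 1)‖ ^ 2 :=
      mul_nonneg (mul_nonneg hL.le (hθ0 k)) (sq_nonneg _)
    exact le_of_mul_le_mul_right (by linarith) (hgx (k + 1))
  have hpot : ∀ k : ℕ, k * ((θ (k + 1) - θbar) * g xb) +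
      θ (k + 1) * (M + L * ‖xb - x k‖ ^ 2) ≤ θ 1 * (M + L * ‖xb - x 0‖ ^ 2) := by
    intro k
    induction k with
    | zero => simp
    | succ k ih =>
      have h := hest k xb hxb
      rw [hfb] at h
      have hd : 0 ≤ θ (k + 1) - θ (k + 2) := sub_nonneg.2 (hanti k)
      have h1 : 0 ≤ (θ (k + 1) - θ (k + 2)) * (M - g (x (k + 1))) :=
        mul_nonneg hd (sub_nonneg.2 (hg_le _ (hx (k + 1)).1))
      have h2 : 0 ≤ (θ (k + 1) - θ (k + 2)) * (L * ‖xb - x (k + 1)‖ ^ 2) := by positivity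
      have h3 : 0 ≤ (k + 1 : ℝ) * ((θ (k + 1) - θ (k + 2)) * g xb) := by positivity
      push_cast
      rw [show k + 1 + 1 = k + 2 from rfl]
      linarith
  refine ⟨sub_nonneg.2 (hlow k), ?_⟩
  have hk : (0 : ℝ) < k := by exact_mod_cast (by omega : 0 < k)
  rw [le_div_iff₀ (mul_pos hk hgb)]
  have hlast : 0 ≤ θ (k + 1) * (M + L * ‖xb - x k‖ ^ 2) :=
    mul_nonneg (hθ0 k) (by positivity)
  linarith [hpot k]
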